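/- Let A₁, A₂, A₃ be the 6×6 integer matrices with rows A₁ = [[1,0,0,0,0,0],[0,1,0,0,0,0],[0,0,1,0,0,0],[1,1,0,5,0,0],[2,0,1,0,5,0],[1,2,1,0,0,5]], A₂ = [[1,0,0,0,0,0],[0,1,0,0,0,0],[0,0,1,0,0,0],[2,1,0,5,0,0],[0,1,1,0,5,0],[3,2,1,0,0,5]], A₃ = [[1,0,0,0,0,0],[0,1,0,0,0,0],[0,0,1,0,0,0],[2,1,0,5,0,0],[0,1,1,0,5,0],[2,3,1,0,0,5]], and let Lᵢ = Aᵢℤ⁶. Then each Lᵢ is irreducible: there do not exist additive subgroups U and V of ℝ⁶, both containing a nonzero vector, such that every vector of U is orthogonal to every vector of V and Lᵢ = U + V with U, V ⊆ Lᵢ. -/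

import Mathlib

/-!
Suppose `L = U ⊕ V` orthogonally and let `g ∈ L`. Writing `g = u + v`, Pythagoras gives
`u ⬝ u + v ⬝ v = g ⬝ g`. If `g ⬝ g ≤ 11`, one of the two summands `x` satisfies `x ⬝ x ≤ 5` and
`x ⬝ g = x ⬝ x`. The lattice has few vectors with `x ⬝ x ≤ 5`: their entries lie in `[-2, 2]`, and
since membership in `L` determines the last three entries modulo `5` from the first three, there
are at most `125` candidates. If only `x = 0` and `x = g` pass the test `x ⬝ g = x ⬝ x`, then `g`
lies in `U` or in `V` (`chain_mem_or`).

For each of the three lattices there are six linearly independent vectors `g` of this kind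
(`chain`), each, from the second on, non-orthogonal to an earlier one (`chain_linked`). Hence all
six lie in the same summand, and the other summand, orthogonal to a basis of `ℝ⁶`, is zero.
-/

open Matrix

/-- The three `6 × 6` basis matrices `A₁, A₂, A₃` of the lattice triple. -/
def paperA : Fin 3 → Matrix (Fin 6) (Fin 6) ℤ :=
  ![!![1,0,0,0,0,0; 0,1,0,0,0,0; 0,0,1,0,0,0; 1,1,0,5,0,0; 2,0,1,0,5,0; 1,2,1,0,0,5],
    !![1,0,0,0,0,0; 0,1,0,0,0,0; 0,0,1,0,0,0; 2,1,0,5,0,0; 0,1,1,0,5,0; 3,2,1,0,0,5],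
    !![1,0,0,0,0,0; 0,1,0,0,0,0; 0,0,1,0,0,0; 2,1,0,5,0,0; 0,1,1,0,5,0; 2,3,1,0,0,5]]

/-- The lattices `Lᵢ = Aᵢℤ⁶` viewed inside `ℝ⁶`. -/
def paperL (i : Fin 3) : Set (Fin 6 → ℝ) :=
  {v | ∃ z : Fin 6 → ℤ, v = ((paperA i).map (Int.cast : ℤ → ℝ)).mulVec fun r => ((z r : ℝ))}

/-- Six vectors of `Lᵢ`, indexed by `Fin 6`, of squared length at most `11`; they span `ℝ⁶` and
none of them is a sum of two nonzero orthogonal vectors of `Lᵢ`. -/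
def chain : Fin 3 → Fin 6 → Fin 6 → ℤ :=
  ![![![0,0,-1,0,-1,-1], ![0,-1,1,-1,1,-1], ![-1,0,1,-1,-1,0],
      ![-2,1,0,-1,1,0], ![0,-1,-1,-1,-1,2], ![-2,-1,-1,2,0,0]],
    ![![0,0,-1,0,-1,-1], ![-2,0,0,1,0,-1], ![-1,1,0,-1,1,-1],
      ![0,-1,1,-1,0,-1], ![-1,0,-1,-2,-1,1], ![0,-1,-2,-1,2,1]],
    ![![0,0,-1,0,-1,-1], ![-1,1,-1,-1,0,0], ![-2,0,0,1,0,1],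
      ![-2,-1,1,0,0,-1], ![0,-1,0,-1,-1,2], ![-1,2,1,0,-2,0]]]

/-- The lattice `Lᵢ` as a set of integer vectors. -/
def intL (i : Fin 3) : Set (Fin 6 → ℤ) := {v | ∃ z, v = paperA i *ᵥ z}

/-- The representative of `r` modulo `5` in `[-2, 2]`. -/
def centered (r : ℤ) : ℤ := (r + 2) % 5 - 2

/-- The only vector of `Lᵢ` with first entries `a, b, c` whose last three entries all lie in
`[-2, 2]`. -/
def shortVec (i : Fin 3) (a b c : ℤ) : Fin 6 → ℤ :=
  ![a, b, c,
    centered (paperA i 3 0 * a + paperA i 3 1 * b + paperA i 3 2 * c),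
    centered (paperA i 4 0 * a + paperA i 4 1 * b + paperA i 4 2 * c),
    centered (paperA i 5 0 * a + paperA i 5 1 * b + paperA i 5 2 * c)]

lemma shortVec_test : ∀ i : Fin 3, ∀ a ∈ Finset.Icc (-2 : ℤ) 2, ∀ b ∈ Finset.Icc (-2 : ℤ) 2,
    ∀ c ∈ Finset.Icc (-2 : ℤ) 2,
    shortVec i a b c ⬝ᵥ shortVec i a b c ≤ 5 → ∀ j : Fin 6,
      shortVec i a b c ⬝ᵥ chain i j = shortVec i a b c ⬝ᵥ shortVec i a b c →
      (∀ r, shortVec i a b c r = 0) ∨ ∀ r, shortVec i a b c r = chain i j r := by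
  decide +kernel

lemma chain_norm : ∀ (i : Fin 3) (j : Fin 6), chain i j ⬝ᵥ chain i j ≤ 11 := by
  decide +kernel

lemma chain_linked : ∀ (i : Fin 3) (j : Fin 6), j ≠ 0 →
    ∃ k < j, chain i k ⬝ᵥ chain i j ≠ 0 := by
  decide +kernel

lemma chain_det : ∀ i : Fin 3, (Matrix.of (chain i)).det ≠ 0 := by
  decide +kernel

/-- The vectors of the chain lie in `Lᵢ`: the last three entries satisfy the congruences modulo `5`
that define the lattice. -/
lemma chain_mem (i : Fin 3) (j : Fin 6) : chain i j ∈ intL i := by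
  refine ⟨![chain i j 0, chain i j 1, chain i j 2,
    (chain i j 3 - (paperA i 3 0 * chain i j 0 + paperA i 3 1 * chain i j 1
      + paperA i 3 2 * chain i j 2)) / 5,
    (chain i j 4 - (paperA i 4 0 * chain i j 0 + paperA i 4 1 * chain i j 1
      + paperA i 4 2 * chain i j 2)) / 5,
    (chain i j 5 - (paperA i 5 0 * chain i j 0 + paperA i 5 1 * chain i j 1
      + paperA i 5 2 * chain i j 2)) / 5], funext ?_⟩
  revert i j
  decide +kernel

lemma abs_le_two_of_norm {v : Fin 6 → ℤ} (h : v ⬝ᵥ v ≤ 5) (j : Fin 6) :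
    -2 ≤ v j ∧ v j ≤ 2 := by
  have h1 : v j * v j ≤ v ⬝ᵥ v :=
    Finset.single_le_sum (f := fun k => v k * v k) (fun k _ => mul_self_nonneg _)
      (Finset.mem_univ j)
  constructor <;> nlinarith

lemma eq_shortVec {i : Fin 3} {v : Fin 6 → ℤ} (hv : v ∈ intL i) (h : v ⬝ᵥ v ≤ 5) :
    v = shortVec i (v 0) (v 1) (v 2) := by
  have hb := abs_le_two_of_norm h
  obtain ⟨z, hz⟩ := hv
  have e := fun j => congrFun hz j
  have h3 := hb 3
  have h4 := hb 4
  have h5 := hb 5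
  have e0 := e 0
  have e1 := e 1
  have e2 := e 2
  have e3 := e 3
  have e4 := e 4
  have e5 := e 5
  clear hz e hb h
  fin_cases i <;>
  · simp [paperA, Matrix.mulVec, dotProduct, Fin.sum_univ_succ] at e0 e1 e2 e3 e4 e5
    ext j
    fin_cases j <;> simp [shortVec, paperA, centered] <;> omega

/-- A lattice vector `p` with `p ⬝ p ≤ 5` that could be an orthogonal summand of `g = chain i j`,
that is, with `p ⬝ g = p ⬝ p`, is trivial: `0` or `g`. -/
lemma eq_zero_or_eq_of_short {i : Fin 3} {j : Fin 6} {p : Fin 6 → ℤ} (hp : p ∈ intL i) (h : p ⬝ᵥ p ≤ 5)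
    (hg : p ⬝ᵥ chain i j = p ⬝ᵥ p) : p = 0 ∨ p = chain i j := by
  have hb := abs_le_two_of_norm h
  have e := eq_shortVec hp h
  have t := shortVec_test i (p 0) (Finset.mem_Icc.2 (hb 0)) (p 1) (Finset.mem_Icc.2 (hb 1))
    (p 2) (Finset.mem_Icc.2 (hb 2))
  rw [← e] at t
  exact (t h j hg).imp funext funext

/-- In an orthogonal decomposition of `Lᵢ` every vector of the chain lies in one summand. -/
lemma chain_mem_or {i : Fin 3} {P Q : AddSubgroup (Fin 6 → ℤ)}
    (ho : ∀ p ∈ P, ∀ q ∈ Q, p ⬝ᵥ q = 0) (hP : ∀ p ∈ P, p ∈ intL i) (hQ : ∀ q ∈ Q, q ∈ intL i)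
    (hs : ∀ w ∈ intL i, ∃ p ∈ P, ∃ q ∈ Q, w = p + q) (j : Fin 6) :
    chain i j ∈ P ∨ chain i j ∈ Q := by
  obtain ⟨p, hp, q, hq, e⟩ := hs _ (chain_mem i j)
  have h0 := ho p hp q hq
  have h0' : q ⬝ᵥ p = 0 := by rw [dotProduct_comm, h0]
  have hn := chain_norm i j
  have hpg : p ⬝ᵥ chain i j = p ⬝ᵥ p := by rw [e, dotProduct_add, h0, add_zero]
  have hqg : q ⬝ᵥ chain i j = q ⬝ᵥ q := by rw [e, dotProduct_add, h0', zero_add]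
  have hsum : chain i j ⬝ᵥ chain i j = p ⬝ᵥ p + q ⬝ᵥ q := by
    rw [← hpg, ← hqg, ← add_dotProduct, ← e]
  by_cases h : p ⬝ᵥ p ≤ 5
  · rcases eq_zero_or_eq_of_short (hP p hp) h hpg with rfl | h
    · right; rw [e, zero_add]; exact hq
    · left; exact h ▸ hp
  · rcases eq_zero_or_eq_of_short (hQ q hq) (by omega) hqg with rfl | h
    · left; rw [e, add_zero]; exact hp
    · right; exact h ▸ hq

/-- A summand containing the first vector of the chain contains the whole chain, so everything
orthogonal to it vanishes. -/
lemma eq_zero_of_chain_zero_mem {i : Fin 3} {P Q : AddSubgroup (Fin 6 → ℤ)}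
    (ho : ∀ p ∈ P, ∀ q ∈ Q, p ⬝ᵥ q = 0) (hor : ∀ j, chain i j ∈ P ∨ chain i j ∈ Q)
    (h0 : chain i 0 ∈ P) : ∀ q ∈ Q, q = 0 := by
  have hall : ∀ j, chain i j ∈ P := by
    intro j
    induction j using WellFoundedLT.induction with
    | ind j ih =>
      by_cases hj : j = 0
      · exact hj ▸ h0
      · obtain ⟨k, hk, hne⟩ := chain_linked i j hj
        exact (hor j).resolve_right fun h => hne (ho _ (ih k hk) _ h)
  intro q hq
  refine Matrix.eq_zero_of_mulVec_eq_zero (chain_det i) ?_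
  ext j
  exact ho _ (hall j) q hq

/-- Coordinatewise inclusion `ℤ⁶ → ℝ⁶`. -/
def toReal : (Fin 6 → ℤ) →+ (Fin 6 → ℝ) := (Int.castAddHom ℝ).compLeft (Fin 6)

lemma toReal_injective : Function.Injective toReal := fun _ _ h =>
  funext fun r => Int.cast_injective (α := ℝ) (congrFun h r)

lemma mem_paperL {i : Fin 3} {v : Fin 6 → ℝ} : v ∈ paperL i ↔ ∃ w ∈ intL i, v = toReal w := by
  have key : ∀ z : Fin 6 → ℤ, ((paperA i).map (Int.cast : ℤ → ℝ)).mulVec (fun r => (z r : ℝ))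
      = toReal (paperA i *ᵥ z) := by
    intro z
    ext r
    simp [toReal, Matrix.mulVec, dotProduct]
  constructor
  · rintro ⟨z, rfl⟩
    exact ⟨_, ⟨z, rfl⟩, key z⟩
  · rintro ⟨_, ⟨z, rfl⟩, rfl⟩
    exact ⟨z, (key z).symm⟩

/-- each `Lᵢ` is irreducible: there are no additive subgroups `U, V` of `ℝ⁶`,
both containing a nonzero vector, mutually orthogonal, contained in `Lᵢ`, with
`Lᵢ = U + V`. -/
theorem stmt_15 :
    ∀ i : Fin 3,
      ¬ ∃ U V : AddSubgroup (Fin 6 → ℝ),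
        (∃ u ∈ U, u ≠ 0) ∧ (∃ v ∈ V, v ≠ 0) ∧
        (∀ u ∈ U, ∀ v ∈ V, (∑ r, u r * v r) = 0) ∧
        (U : Set (Fin 6 → ℝ)) ⊆ paperL i ∧ (V : Set (Fin 6 → ℝ)) ⊆ paperL i ∧
        paperL i = {w | ∃ u ∈ U, ∃ v ∈ V, w = u + v} := by
  rintro i ⟨U, V, ⟨u, hu, hu0⟩, ⟨v, hv, hv0⟩, ho, hU, hV, hL⟩
  have ho' : ∀ p ∈ U.comap toReal, ∀ q ∈ V.comap toReal, p ⬝ᵥ q = 0 := by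
    intro p hp q hq
    have := ho _ hp _ hq
    simp only [toReal, AddMonoidHom.compLeft_apply, Function.comp_apply,
      Int.coe_castAddHom] at this
    exact_mod_cast this
  have hI : ∀ W : AddSubgroup (Fin 6 → ℝ), (W : Set (Fin 6 → ℝ)) ⊆ paperL i →
      ∀ p ∈ W.comap toReal, p ∈ intL i := by
    intro W hW p hp
    obtain ⟨w, hw, e⟩ := mem_paperL.1 (hW hp)
    exact toReal_injective e ▸ hw
  have hs : ∀ w ∈ intL i, ∃ p ∈ U.comap toReal, ∃ q ∈ V.comap toReal, w = p + q := by
    intro w hw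
    have h : toReal w ∈ paperL i := mem_paperL.2 ⟨w, hw, rfl⟩
    rw [hL] at h
    obtain ⟨a, ha, b, hb, e⟩ := h
    obtain ⟨p, -, rfl⟩ := mem_paperL.1 (hU ha)
    obtain ⟨q, -, rfl⟩ := mem_paperL.1 (hV hb)
    exact ⟨p, ha, q, hb, toReal_injective (by rw [e, map_add])⟩
  have hor := chain_mem_or ho' (hI U hU) (hI V hV) hs
  obtain ⟨p, -, rfl⟩ := mem_paperL.1 (hU hu)
  obtain ⟨q, -, rfl⟩ := mem_paperL.1 (hV hv)
  rcases hor 0 with h | h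
  · exact hv0 (by rw [eq_zero_of_chain_zero_mem ho' hor h q hv, map_zero])
  · refine hu0 ?_
    rw [eq_zero_of_chain_zero_mem (P := V.comap toReal) (Q := U.comap toReal)
      (fun a ha b hb => by rw [dotProduct_comm]; exact ho' b hb a ha)
      (fun j => (hor j).symm) h p hu, map_zero]
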